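/- Let M = cQ + εD ∈ 𝔻ℍ[t] be a bounded monic reduced motion polynomial of degree n with monic c ∈ ℝ[t], Q, D ∈ ℍ[t], mrpf(Q) = 1, and ν(M) = c²·ν(Q) = Nⁿ for some irreducible quadratic N ∈ ℝ[t]. If M admits a factorization into monic linear motion polynomial factors, then there exist Q_L, Q_R, D_L, D_R, D' ∈ ℍ[t] such that M = (Q_L + εD_L)·(c + εD')·(Q_R + εD_R), where each of the three factors Q_L + εD_L, c + εD', and Q_R + εD_R is a (possibly empty) product of monic linear motion polynomials. -/

import Mathlib

open Polynomial DualNumber TrivSqZeroExt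

noncomputable section

/-- The real quaternions. -/
abbrev Hq : Type := Quaternion ℝ

/-- The dual quaternions. -/
abbrev DHq : Type := DualNumber Hq

/-- Conjugation of a dual quaternion: `(p + ε d)* = p* + ε d*`. -/
instance : Star DHq := ⟨fun x => inl (star x.fst) + inr (star x.snd)⟩

/-- Coefficient-wise (quaternion) conjugation of a polynomial. -/
def cstar {R : Type*} [Semiring R] [Star R] (A : R[X]) : R[X] :=
  A.sum fun n a => Polynomial.C (star a) * Polynomial.X ^ n

/-- The embedding `ℝ[t] → ℍ[t]`. -/
def qPoly (f : ℝ[X]) : Hq[X] := f.map (algebraMap ℝ Hq)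

/-- The embedding `ℍ[t] → 𝔻ℍ[t]` (primal part). -/
def dhQ (P : Hq[X]) : DHq[X] := P.map (inlHom Hq Hq)

/-- The embedding `ℝ[t] → 𝔻ℍ[t]`. -/
def dPoly (f : ℝ[X]) : DHq[X] := dhQ (qPoly f)

/-- The dual quaternion polynomial `P + ε D` with primal part `P` and dual part `D`. -/
def mp (P D : Hq[X]) : DHq[X] := dhQ P + Polynomial.C ε * dhQ D

/-- The primal part of a dual quaternion polynomial. -/
def primal (A : DHq[X]) : Hq[X] := A.map (fstHom ℝ Hq Hq).toRingHom

/-- A motion polynomial: a dual quaternion polynomial whose norm polynomial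
`ν(M) = M·M*` is a nonzero real polynomial. -/
def IsMotion (M : DHq[X]) : Prop := ∃ f : ℝ[X], f ≠ 0 ∧ M * cstar M = dPoly f

/-- A real polynomial divides a quaternion polynomial. -/
def RDvdQ (f : ℝ[X]) (A : Hq[X]) : Prop := ∃ B : Hq[X], A = qPoly f * B

/-- A real polynomial divides a dual quaternion polynomial. -/
def RDvdD (f : ℝ[X]) (A : DHq[X]) : Prop := ∃ B : DHq[X], A = dPoly f * B

/-- `g` is the greatest common monic real polynomial divisor of a quaternion polynomial `A`
(with itself), i.e. `g = mrpf A`. -/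
def IsMrpfQ (g : ℝ[X]) (A : Hq[X]) : Prop :=
  g.Monic ∧ RDvdQ g A ∧ ∀ f : ℝ[X], f.Monic → RDvdQ f A → f ∣ g

/-- `g` is the greatest common monic real polynomial divisor of `c ∈ ℝ[t]` and a quaternion
polynomial `A`, i.e. `g = mrpf(c, A)`. -/
def IsMrpf2 (g : ℝ[X]) (c : ℝ[X]) (A : Hq[X]) : Prop :=
  g.Monic ∧ g ∣ c ∧ RDvdQ g A ∧
    ∀ f : ℝ[X], f.Monic → f ∣ c → RDvdQ f A → f ∣ g

/-- `g` is the greatest common monic real polynomial divisor of `c ∈ ℝ[t]` and two quaternion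
polynomials `A` and `B`, i.e. `g = mrpf(c, A, B)`. -/
def IsMrpf3 (g : ℝ[X]) (c : ℝ[X]) (A B : Hq[X]) : Prop :=
  g.Monic ∧ g ∣ c ∧ RDvdQ g A ∧ RDvdQ g B ∧
    ∀ f : ℝ[X], f.Monic → f ∣ c → RDvdQ f A → RDvdQ f B → f ∣ g

/-- A quaternion polynomial is reduced: `mrpf = 1`, i.e. it has only constant real
polynomial factors. -/
def ReducedQ (A : Hq[X]) : Prop := ∀ f : ℝ[X], f.Monic → RDvdQ f A → f = 1

/-- A dual quaternion polynomial is reduced: `mrpf = 1`. -/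
def ReducedD (A : DHq[X]) : Prop := ∀ f : ℝ[X], f.Monic → RDvdD f A → f = 1

/-- Boundedness of a (monic reduced) motion polynomial: `mrpf` of its primal part has
no real root, equivalently no linear real polynomial `t - a` divides the primal part. -/
def BoundedD (M : DHq[X]) : Prop :=
  ∀ a : ℝ, ¬ RDvdQ (Polynomial.X - Polynomial.C a) (primal M)

/-- A generic motion polynomial: monic, a motion polynomial, with `mrpf` of the primal
part equal to `1`. -/
def GenericD (M : DHq[X]) : Prop :=
  M.Monic ∧ IsMotion M ∧ ReducedQ (primal M)

/-- The monic linear dual quaternion polynomial `t - p - ε d`. -/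
def lin (p d : Hq) : DHq[X] := mp (Polynomial.X - Polynomial.C p) (-Polynomial.C d)

/-- `M` admits a factorization into monic linear motion polynomial factors. -/
def HasLinFact (M : DHq[X]) : Prop :=
  ∃ L : List DHq, (∀ h ∈ L, IsMotion (Polynomial.X - Polynomial.C h)) ∧
    M = (L.map fun h => Polynomial.X - Polynomial.C h).prod

end
section helpers

lemma coeff_cstarH (A : Hq[X]) (n : ℕ) : (cstar A).coeff n = star (A.coeff n) := by
  unfold cstar
  rw [Polynomial.sum_def, Polynomial.finsetSum_coeff]
  simp only [Polynomial.coeff_C_mul, Polynomial.coeff_X_pow, mul_ite, mul_one, mul_zero]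
  rw [Finset.sum_ite_eq]
  split_ifs with h
  · rfl
  · rw [Polynomial.notMem_support_iff.mp h, star_zero]

lemma cstar_mulH (A B : Hq[X]) : cstar (A * B) = cstar B * cstar A := by
  ext1 n
  rw [coeff_cstarH, Polynomial.coeff_mul, Polynomial.coeff_mul, star_sum,
    ← Finset.Nat.sum_antidiagonal_swap]
  refine Finset.sum_congr rfl fun x _ => ?_
  simp [coeff_cstarH, star_mul]

lemma cstar_addH (A B : Hq[X]) : cstar (A + B) = cstar A + cstar B := by
  ext1 n; simp [coeff_cstarH]

lemma cstar_negH (A : Hq[X]) : cstar (-A) = -cstar A := by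
  ext1 n; simp [coeff_cstarH]

lemma cstar_subH (A B : Hq[X]) : cstar (A - B) = cstar A - cstar B := by
  ext1 n; simp [coeff_cstarH]

lemma cstar_cstarH (A : Hq[X]) : cstar (cstar A) = A := by
  ext1 n; simp [coeff_cstarH]

lemma cstar_CH (a : Hq) : cstar (C a) = C (star a) := by
  ext1 n; rw [coeff_cstarH, coeff_C, coeff_C]; split_ifs <;> simp

lemma cstar_XH : cstar (X : Hq[X]) = X := by
  ext1 n; rw [coeff_cstarH, coeff_X]; split_ifs <;> simp

lemma cstar_oneH : cstar (1 : Hq[X]) = 1 := by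
  have := cstar_CH 1; simpa using this

lemma cstar_qPoly (f : ℝ[X]) : cstar (qPoly f) = qPoly f := by
  ext1 n; rw [coeff_cstarH, qPoly, coeff_map]
  exact Quaternion.star_coe _

lemma qPoly_comm (f : ℝ[X]) (A : Hq[X]) : qPoly f * A = A * qPoly f := by
  ext1 n
  rw [coeff_mul, coeff_mul, ← Finset.Nat.sum_antidiagonal_swap]
  refine Finset.sum_congr rfl fun x _ => ?_
  simp only [qPoly, coeff_map, Prod.fst_swap, Prod.snd_swap]
  exact Algebra.commutes _ _

lemma qPoly_mul (f g : ℝ[X]) : qPoly (f * g) = qPoly f * qPoly g := by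
  simp [qPoly]

lemma qPoly_pow (f : ℝ[X]) (k : ℕ) : qPoly (f ^ k) = qPoly f ^ k := by
  simp [qPoly]

lemma qPoly_inj {f g : ℝ[X]} (h : qPoly f = qPoly g) : f = g :=
  Polynomial.map_injective _ (algebraMap ℝ Hq).injective h

/-- The hypotheses on the real quadratic. -/
structure Quad (K : Hq[X]) : Prop where
  monic : K.Monic
  deg : K.natDegree = 2
  comm : ∀ A, K * A = A * K
  star : cstar K = K

/-- Linear factors of norm `K`. -/
def NormK (K : Hq[X]) (p : Hq) : Prop := (X - C p) * (X - C (star p)) = K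

lemma NormK.conj {K : Hq[X]} {p : Hq} (h : NormK K p) : NormK K (star p) := by
  unfold NormK at *
  rw [← h, star_star]
  have h1 : star p * p = p * star p := by rw [Quaternion.star_mul_self, Quaternion.self_mul_star]
  have h2 : star p + p = p + star p := add_comm _ _
  ext1 n
  simp only [sub_mul, mul_sub, ← C_mul, h1, X_mul_C]
  congr 1
  abel

lemma NormK.dvd {K : Hq[X]} {p : Hq} (h : NormK K p) : (X - C p) ∣ K := ⟨_, h.symm⟩

lemma dvd_const {p k : Hq} (h : (X - C p) ∣ C k) : k = 0 := by
  by_contra hk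
  refine (monic_X_sub_C p).not_dvd_of_natDegree_lt (by simpa using hk) ?_ h
  simp

lemma Quad.rem {K : Hq[X]} (hK : Quad K) (A : Hq[X]) :
    ∃ (S : Hq[X]) (a b : Hq), A = K * S + (X * C a + C b) := by
  have h := modByMonic_add_div A K
  have hd : (A %ₘ K).natDegree ≤ 1 := by
    have := natDegree_modByMonic_lt A hK.monic (by intro h; have := hK.deg; simp [h] at this)
    rw [hK.deg] at this; omega
  obtain ⟨a, b, hab⟩ := exists_eq_X_add_C_of_natDegree_le_one hd
  refine ⟨A /ₘ K, a, b, ?_⟩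
  rw [X_mul_C, ← hab, add_comm]; exact h.symm

lemma Quad.dvd_left {K : Hq[X]} (hK : Quad K) {A : Hq[X]} (B : Hq[X]) (h : K ∣ A) : K ∣ B * A := by
  obtain ⟨c, rfl⟩ := h
  exact ⟨B * c, by rw [← mul_assoc, ← hK.comm, mul_assoc]⟩

lemma rem_of_dvd {K : Hq[X]} {p : Hq} (hp : NormK K p) {A S : Hq[X]} {a b : Hq}
    (hA : A = K * S + (X * C a + C b)) (h : (X - C p) ∣ A) : b = -(p * a) := by
  have h1 : (X - C p) ∣ C (p * a + b) := by
    have e : C (p * a + b) = A - K * S - (X - C p) * C a := by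
      rw [hA, sub_mul, ← C_mul, C_add]; abel
    rw [e]
    exact dvd_sub (dvd_sub h (hp.dvd.mul_right _)) (dvd_mul_right _ _)
  have := dvd_const h1
  rw [eq_neg_iff_add_eq_zero, add_comm]; exact this

lemma two_left {K : Hq[X]} (hK : Quad K) {p q : Hq} (hp : NormK K p) (hq : NormK K q)
    (hpq : p ≠ q) {A : Hq[X]} (h1 : (X - C p) ∣ A) (h2 : (X - C q) ∣ A) : K ∣ A := by
  obtain ⟨S, a, b, hA⟩ := hK.rem A
  have e1 := rem_of_dvd hp hA h1
  have e2 := rem_of_dvd hq hA h2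
  have e3 : (p - q) * a = 0 := by
    rw [sub_mul, sub_eq_zero]; rw [e1] at e2; exact neg_injective e2
  have ha : a = 0 := (mul_eq_zero.mp e3).resolve_left (sub_ne_zero.mpr hpq)
  subst ha
  simp only [mul_zero, neg_zero] at e1
  subst e1
  exact ⟨S, by simpa using hA⟩

lemma Quad.dvd_cstar {K : Hq[X]} (hK : Quad K) {A : Hq[X]} (h : K ∣ cstar A) : K ∣ A := by
  obtain ⟨c, hc⟩ := h
  refine ⟨cstar c, ?_⟩
  rw [← cstar_cstarH A, hc, cstar_mulH, hK.star, hK.comm]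

lemma cstar_lin (p : Hq) : cstar (X - C p) = X - C (star p) := by
  rw [cstar_subH, cstar_XH, cstar_CH]

lemma two_right {K : Hq[X]} (hK : Quad K) {p q : Hq} (hp : NormK K p) (hq : NormK K q)
    (hpq : p ≠ q) {A B B' : Hq[X]} (h1 : A = B * (X - C p)) (h2 : A = B' * (X - C q)) : K ∣ A := by
  apply hK.dvd_cstar
  refine two_left hK hp.conj hq.conj (fun h => hpq (star_injective h)) ⟨cstar B, ?_⟩ ⟨cstar B', ?_⟩
  · rw [h1, cstar_mulH, cstar_lin]
  · rw [h2, cstar_mulH, cstar_lin]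

lemma annih {K : Hq[X]} (hK : Quad K) {w : Hq} (hw : NormK K w) {A B : Hq[X]}
    (hB : ¬ K ∣ B) (hwB : (X - C w) ∣ B) (h : K ∣ A * B) :
    ∃ E, A = E * (X - C (star w)) := by
  obtain ⟨S, a, b, hS⟩ := hK.rem B
  have e1 := rem_of_dvd hw hS hwB
  have hS' : B = K * S + (X - C w) * C a := by
    rw [hS, e1, sub_mul, ← C_mul, C_neg]; abel
  have ha : a ≠ 0 := by
    rintro rfl
    exact hB ⟨S, by simpa using hS'⟩
  have h3 : K ∣ A * (X - C w) := by
    have e : A * (X - C w) = (A * B - A * (K * S)) * C a⁻¹ := by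
      rw [hS', ← mul_sub, add_sub_cancel_left, mul_assoc, mul_assoc, ← C_mul, mul_inv_cancel₀ ha]
      simp
    rw [e]
    exact (dvd_sub h (hK.dvd_left _ (dvd_mul_right _ _))).mul_right _
  obtain ⟨E, hE⟩ := h3
  refine ⟨E, ?_⟩
  have h4 : NormK K (star w) := hw.conj
  unfold NormK at h4
  rw [star_star] at h4
  rw [hK.comm, ← h4, ← mul_assoc] at hE
  exact mul_right_cancel₀ (monic_X_sub_C w).ne_zero hE

end helpers
section lists

/-- Primal part of the product of the linear factors. -/
noncomputable def pP : List DHq → Hq[X]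
  | [] => 1
  | h :: l => (X - C h.fst) * pP l

/-- Dual part of the product of the linear factors. -/
noncomputable def pD : List DHq → Hq[X]
  | [] => 0
  | h :: l => (X - C h.fst) * pD l - C h.snd * pP l

lemma pP_append (l l' : List DHq) : pP (l ++ l') = pP l * pP l' := by
  induction l with
  | nil => simp [pP]
  | cons h l ih => simp [pP, ih, mul_assoc]

lemma pD_append (l l' : List DHq) : pD (l ++ l') = pP l * pD l' + pD l * pP l' := by
  induction l with
  | nil => simp [pP, pD]
  | cons h l ih =>
    simp only [pP, pD, ih, pP_append, List.cons_append]
    noncomm_ring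

/-- A linear motion polynomial factor with norm `K`. -/
structure Good (K : Hq[X]) (h : DHq) : Prop where
  mot : IsMotion (X - C h)
  norm : NormK K h.fst
  sk : star h.snd = -h.snd
  cm : h.fst * h.snd = h.snd * star h.fst

lemma Good.cm' {K : Hq[X]} {h : DHq} (g : Good K h) : h.snd * h.fst = star h.fst * h.snd := by
  have e : h.fst + star h.fst = ((2 * h.fst.re : ℝ) : Hq) := by
    rw [Quaternion.self_add_star']
  have e2 : h.snd * (h.fst + star h.fst) = (h.fst + star h.fst) * h.snd := by
    rw [e]; exact (Quaternion.coe_commutes _ _).symm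
  rw [mul_add, add_mul, ← g.cm, add_comm] at e2
  exact add_left_cancel e2

/-- `d (t - p*) = (t - p) d`. -/
lemma Good.sw {K : Hq[X]} {h : DHq} (g : Good K h) :
    C h.snd * (X - C (star h.fst)) = (X - C h.fst) * C h.snd := by
  rw [mul_sub, sub_mul, ← C_mul, ← C_mul, g.cm, X_mul_C]

lemma Good.sw' {K : Hq[X]} {h : DHq} (g : Good K h) :
    C h.snd * (X - C (h.fst)) = (X - C (star h.fst)) * C h.snd := by
  rw [mul_sub, sub_mul, ← C_mul, ← C_mul, g.cm', X_mul_C]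

lemma pP_monic (l : List DHq) : (pP l).Monic := by
  induction l with
  | nil => exact monic_one
  | cons h l ih => exact (monic_X_sub_C _).mul ih

/-- If the primal part is divisible by `K`, the first factor divides the dual part. -/
lemma first_dvd {K : Hq[X]} {h : DHq} (g : Good K h) {l : List DHq}
    (hd : K ∣ pP (h :: l)) : (X - C h.fst) ∣ pD (h :: l) := by
  obtain ⟨Q, hQ⟩ := hd
  rw [pP, ← g.norm, mul_assoc] at hQ
  have h1 := mul_left_cancel₀ (monic_X_sub_C h.fst).ne_zero hQ
  refine ⟨pD l - C h.snd * Q, ?_⟩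
  rw [pD, h1, ← mul_assoc, g.sw, mul_sub, mul_assoc]

/-- Real norm polynomial of `t - p`. -/
noncomputable def nq (p : Hq) : ℝ[X] := X ^ 2 - C (2 * p.re) * X + C (Quaternion.normSq p)

lemma qPoly_nq (p : Hq) : qPoly (nq p) = (X - C p) * (X - C (star p)) := by
  have e1 : (algebraMap ℝ Hq) (2 * p.re) = p + star p :=
    (Quaternion.self_add_star' p).symm
  have e2 : (algebraMap ℝ Hq) (Quaternion.normSq p) = p * star p :=
    (Quaternion.self_mul_star p).symm
  simp only [qPoly, nq, Polynomial.map_add, Polynomial.map_sub, Polynomial.map_pow,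
    Polynomial.map_mul, map_X, map_C]
  rw [e1, e2]
  simp only [sub_mul, mul_sub, C_add, C_mul, add_mul, X_mul_C, sq]
  abel

lemma norm_pP (l : List DHq) :
    pP l * cstar (pP l) = qPoly ((l.map fun x => nq x.fst).prod) := by
  induction l with
  | nil => simp [pP, cstar_oneH, qPoly]
  | cons x l ih =>
    rw [pP, cstar_mulH, mul_assoc, ← mul_assoc (pP l), ih, qPoly_comm, ← mul_assoc, cstar_lin,
      List.map_cons, List.prod_cons, qPoly_mul, qPoly_nq]

/-- The Study condition. -/
lemma study {K : Hq[X]} (l : List DHq) (hl : ∀ h ∈ l, Good K h) :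
    pP l * cstar (pD l) + pD l * cstar (pP l) = 0 := by
  induction l with
  | nil => simp [pP, pD, cstar]
  | cons h l ih =>
    have ih := ih fun x hx => hl x (List.mem_cons_of_mem _ hx)
    have g := hl h List.mem_cons_self
    have hZ := norm_pP l
    set Z := (l.map fun x => nq x.fst).prod
    rw [pP, pD, cstar_subH, cstar_mulH, cstar_mulH, cstar_mulH, cstar_lin, cstar_CH, g.sk, C_neg]
    have e : (X - C h.fst) * pP l * (cstar (pD l) * (X - C (star h.fst)) - cstar (pP l) * -C h.snd)
        + ((X - C h.fst) * pD l - C h.snd * pP l) * (cstar (pP l) * (X - C (star h.fst)))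
        = (X - C h.fst) * (pP l * cstar (pD l) + pD l * cstar (pP l)) * (X - C (star h.fst))
          + (X - C h.fst) * (pP l * cstar (pP l)) * C h.snd
          - C h.snd * (pP l * cstar (pP l)) * (X - C (star h.fst)) := by
      noncomm_ring
    rw [e, ih, hZ, mul_assoc _ (qPoly Z), qPoly_comm Z, ← qPoly_comm Z (C h.snd), mul_assoc (qPoly Z),
      g.sw, qPoly_comm Z ((X - C h.fst) * C h.snd), mul_assoc,
      mul_assoc (X - C h.fst), qPoly_comm Z (C h.snd)]
    simp

lemma dvd_mid {K : Hq[X]} (hK : Quad K) (l1 l2 l3 : List DHq) (h1 : K ∣ pP l2) (h2 : K ∣ pD l2) :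
    K ∣ pP (l1 ++ l2 ++ l3) ∧ K ∣ pD (l1 ++ l2 ++ l3) := by
  rw [pP_append, pP_append, pD_append, pD_append, pP_append]
  have a := hK.dvd_left (pP l1) h1
  have b := hK.dvd_left (pP l1) h2
  have c := hK.dvd_left (pD l1) h1
  exact ⟨a.mul_right _, dvd_add (a.mul_right _) ((dvd_add b c).mul_right _)⟩

lemma Quad.ndvd_one {K : Hq[X]} (hK : Quad K) : ¬ K ∣ 1 := by
  apply hK.monic.not_dvd_of_natDegree_lt one_ne_zero
  simp [hK.deg]

lemma Quad.val {K : Hq[X]} (hK : Quad K) {a b : ℕ} {A B : Hq[X]} (hA : ¬ K ∣ A) (hB : ¬ K ∣ B)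
    (h : K ^ a * A = K ^ b * B) : a = b ∧ A = B := by
  have hne : K ≠ 0 := hK.monic.ne_zero
  induction a generalizing b with
  | zero =>
    cases b with
    | zero => simpa using h
    | succ b => exact absurd ⟨K ^ b * B, by rw [← mul_assoc, ← pow_succ']; simpa using h⟩ hA
  | succ a ih =>
    cases b with
    | zero => exact absurd ⟨K ^ a * A, by rw [← mul_assoc, ← pow_succ']; simpa using h.symm⟩ hB
    | succ b =>
      rw [pow_succ', pow_succ', mul_assoc, mul_assoc] at h
      obtain ⟨h1, h2⟩ := ih (mul_left_cancel₀ hne h)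
      exact ⟨by rw [h1], h2⟩

lemma Quad.comm_pow {K : Hq[X]} (hK : Quad K) (k : ℕ) (A : Hq[X]) : K ^ k * A = A * K ^ k :=
  Commute.pow_left (hK.comm A) k

lemma Quad.star_pow {K : Hq[X]} (hK : Quad K) (k : ℕ) : cstar (K ^ k) = K ^ k := by
  induction k with
  | zero => simp [cstar_oneH]
  | succ k ih => rw [pow_succ, cstar_mulH, ih, hK.star, ← pow_succ', pow_succ]

end lists
section mainind

/-- Three consecutive factors `p, p*, p` give a multiple of `K`. -/
lemma three {K : Hq[X]} {a b c : DHq} (ga : Good K a) (gb : Good K b)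
    (hb : b.fst = star a.fst) (hc : c.fst = a.fst) :
    K ∣ pP [a, b, c] ∧ K ∣ pD [a, b, c] := by
  have hn := ga.norm
  unfold NormK at hn
  have s1 := ga.sw
  have s2 := gb.sw
  have s3 := ga.sw'
  rw [hb, star_star] at s2
  simp only [pP, pD, hb, hc]
  constructor
  · rw [← mul_assoc, hn]; exact dvd_mul_right _ _
  · refine ⟨-C c.snd - C b.snd - C a.snd, ?_⟩
    have e : (X - C a.fst) * ((X - C (star a.fst)) * ((X - C a.fst) * 0 - C c.snd * 1)
          - C b.snd * ((X - C a.fst) * 1)) - C a.snd * ((X - C (star a.fst)) * ((X - C a.fst) * 1))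
        = -(((X - C a.fst) * (X - C (star a.fst))) * C c.snd)
          - (X - C a.fst) * (C b.snd * (X - C a.fst))
          - C a.snd * (X - C (star a.fst)) * (X - C a.fst) := by noncomm_ring
    rw [e, s1, s2, mul_assoc _ (C a.snd), s3, ← mul_assoc, ← mul_assoc, hn]
    noncomm_ring

lemma impossible {K : Hq[X]} (hK : Quad K) {a b : DHq} {l t : List DHq} {k : ℕ}
    (ga : Good K a) (gb : Good K b) (hl : ∀ h ∈ l, Good K h) (ht : ∀ h ∈ t, Good K h)
    (hb : b.fst = star a.fst) (hne : l ≠ []) (hP : pP t = K ^ (k + 1))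
    (hQ : ¬ K ∣ pP l)
    (hred : ¬ (K ∣ pP (a :: b :: (l ++ t)) ∧ K ∣ pD (a :: b :: (l ++ t)))) : False := by
  have hall : ∀ h ∈ a :: b :: (l ++ t), Good K h := by
    intro h hh
    simp only [List.mem_cons, List.mem_append] at hh
    rcases hh with rfl | rfl | h1 | h1
    exacts [ga, gb, hl _ h1, ht _ h1]
  have hn := ga.norm
  unfold NormK at hn
  -- primal part
  have hPM : pP (a :: b :: (l ++ t)) = K ^ (k + 2) * pP l := by
    rw [pP, pP, pP_append, hP, hb, ← mul_assoc, hn, ← hK.comm_pow, ← mul_assoc, ← pow_succ']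
  have hKP : K ∣ pP (a :: b :: (l ++ t)) := by
    rw [hPM]; exact (dvd_pow_self K (by omega)).mul_right _
  have hKD : ¬ K ∣ pD (a :: b :: (l ++ t)) := fun h => hred ⟨hKP, h⟩
  have hD1 := first_dvd ga hKP
  -- last factor of l, first factor of t
  obtain ⟨q, l', rfl⟩ := List.exists_cons_of_ne_nil hne
  have gq := hl q List.mem_cons_self
  have hqp : q.fst ≠ a.fst := by
    intro h
    have := three ga gb hb h
    exact hred (dvd_mid hK [] [a, b, q] (l' ++ t) this.1 this.2)
  obtain ⟨L, r, hLr⟩ : ∃ L r, q :: l' = L ++ [r] :=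
    ⟨_, _, (List.dropLast_append_getLast (List.cons_ne_nil q l')).symm⟩
  have gr : Good K r := hl r (by rw [hLr]; simp)
  cases t with
  | nil =>
    refine hK.ndvd_one ⟨K ^ k, ?_⟩
    rw [← pow_succ', ← hP]; rfl
  | cons s t' =>
    have gs := ht s List.mem_cons_self
    have hKt : K ∣ pP (s :: t') := by rw [hP]; exact dvd_pow_self K (by omega)
    obtain ⟨D5, hD5⟩ := first_dvd gs hKt
    -- vectorial
    have hv : cstar (pD (s :: t')) = - pD (s :: t') := by
      have := study (s :: t') ht
      rw [hP, hK.star_pow, ← hK.comm_pow, ← mul_add] at this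
      have := (mul_eq_zero.mp this).resolve_left (pow_ne_zero _ hK.monic.ne_zero)
      exact eq_neg_of_add_eq_zero_left this
    have hv2 : pD (s :: t') = -cstar D5 * (X - C (star s.fst)) := by
      rw [← neg_neg (pD (s :: t')), ← hv, hD5, cstar_mulH, cstar_lin, neg_mul]
    -- D Q* divisible by K
    have hst := study _ hall
    rw [hPM, cstar_mulH, hK.star_pow, ← hK.comm_pow, mul_assoc] at hst
    set D := pD (a :: b :: (q :: l' ++ s :: t')) with hDdef
    have hst2 : D * cstar (pP (q :: l')) = pP (q :: l') * -cstar D := by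
      have e : K ^ (k + 2) * (pP (q :: l') * cstar D + D * cstar (pP (q :: l'))) = 0 := by
        rw [mul_add, ← mul_assoc _ D, hK.comm_pow _ D, mul_assoc D]; exact hst
      have e := (mul_eq_zero.mp e).resolve_left (pow_ne_zero _ hK.monic.ne_zero)
      rw [mul_neg]; exact eq_neg_of_add_eq_zero_right e
    have hDQ : K ∣ D * cstar (pP (q :: l')) := by
      refine two_left hK ga.norm gq.norm (Ne.symm hqp) (hD1.mul_right _) ?_
      rw [hst2, pP, mul_assoc]; exact dvd_mul_right _ _
    obtain ⟨E, hE⟩ : ∃ E, D = E * (X - C (star (star r.fst))) := by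
      refine annih hK gr.norm.conj (B := cstar (pP (q :: l'))) ?_ ?_ hDQ
      · intro h; exact hQ (hK.dvd_cstar h)
      · rw [hLr, pP_append, cstar_mulH]
        refine Dvd.dvd.mul_right ?_ _
        simp [pP, cstar_lin]
    rw [star_star] at hE
    have hF : ∃ F, D = F * (X - C (star s.fst)) := by
      have hsn := gs.norm
      unfold NormK at hsn
      refine ⟨pP (a :: b :: (q :: l')) * -cstar D5 + pD (a :: b :: (q :: l')) * K ^ k * (X - C s.fst), ?_⟩
      have : a :: b :: (q :: l' ++ s :: t') = (a :: b :: (q :: l')) ++ (s :: t') := rfl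
      rw [hDdef, this, pD_append, hP, hv2, add_mul, mul_assoc _ (X - C s.fst), hsn, pow_succ,
        mul_assoc, mul_assoc]
    obtain ⟨F, hF⟩ := hF
    have hrs : r.fst = star s.fst := by
      by_contra h
      exact hKD (two_right hK gr.norm gs.norm.conj h hE hF)
    have hsn := gs.norm.conj
    unfold NormK at hsn
    rw [star_star] at hsn
    apply hred
    have hm := dvd_mid hK (a :: b :: L) (r :: s :: t') [] ?_ ?_
    · have e : a :: b :: (q :: l' ++ s :: t') = a :: b :: L ++ (r :: s :: t') ++ [] := by
        rw [hLr]; simp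
      rw [hDdef, e]; exact hm
    · rw [pP]; exact hK.dvd_left _ hKt
    · rw [pD, hrs, hD5, ← mul_assoc, hsn]
      exact dvd_sub (dvd_mul_right _ _) (hK.dvd_left _ hKt)

lemma main_ind {K : Hq[X]} (hK : Quad K) (n : ℕ) : ∀ l : List DHq, l.length = n →
    (∀ h ∈ l, Good K h) → ¬ (K ∣ pP l ∧ K ∣ pD l) →
    ∃ (l1 l2 l3 : List DHq) (k : ℕ), (∀ h ∈ l1, Good K h) ∧ (∀ h ∈ l2, Good K h) ∧
      (∀ h ∈ l3, Good K h) ∧ l1.length + l2.length + l3.length = n ∧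
      pP l = pP (l1 ++ l2 ++ l3) ∧ pD l = pD (l1 ++ l2 ++ l3) ∧
      pP l2 = K ^ k ∧ ¬ K ∣ pP l1 * pP l3 := by
  induction n with
  | zero =>
    intro l hl _ _
    obtain rfl := List.length_eq_zero_iff.mp hl
    refine ⟨[], [], [], 0, ?_⟩
    simp [pP]
    exact hK.ndvd_one
  | succ n ih =>
    intro l0 hl0 hg0 hr0
    obtain ⟨a, l, rfl⟩ := List.exists_cons_of_length_eq_add_one hl0
    have ga := hg0 a List.mem_cons_self
    have han := ga.norm
    unfold NormK at han
    obtain ⟨l1, l2, l3, k, g1, g2, g3, hlen, eP, eD, e2, hQ⟩ := ih l (by simpa using hl0)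
      (fun h hh => hg0 h (List.mem_cons_of_mem _ hh))
      (fun h => hr0 (by simpa using dvd_mid hK [a] l [] h.1 h.2))
    have eP0 : pP (a :: l) = pP (a :: (l1 ++ l2 ++ l3)) := by rw [pP, pP, eP]
    have eD0 : pD (a :: l) = pD (a :: (l1 ++ l2 ++ l3)) := by rw [pD, pD, eP, eD]
    rw [eP0, eD0] at hr0
    rw [eP0, eD0]
    have first : ∀ (h : DHq) (B : Hq[X]), Good K h → ¬ K ∣ (X - C h.fst) * B →
        K ∣ (X - C a.fst) * ((X - C h.fst) * B) → h.fst = star a.fst := by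
      intro h B gh hB hd
      by_contra hne
      apply hB
      refine two_left hK gh.norm ga.norm.conj hne (dvd_mul_right _ _) ?_
      obtain ⟨Z, hZ⟩ := hd
      rw [← han, mul_assoc] at hZ
      exact ⟨Z, mul_left_cancel₀ (monic_X_sub_C _).ne_zero hZ⟩
    by_cases hc : K ∣ (X - C a.fst) * (pP l1 * pP l3)
    swap
    · refine ⟨a :: l1, l2, l3, k, ?_, g2, g3, ?_, by simp, by simp, e2, ?_⟩
      · simpa using ⟨ga, g1⟩
      · simp; omega
      · rwa [pP, mul_assoc]
    have ndvd_tail : ∀ (A B : Hq[X]), ¬ K ∣ A * B → ¬ K ∣ B := fun A B h h' => h (hK.dvd_left _ h')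
    cases l1 with
    | nil =>
      cases l3 with
      | nil =>
        exfalso
        simp only [pP, mul_one] at hc
        refine hK.monic.not_dvd_of_natDegree_lt (monic_X_sub_C _).ne_zero ?_ hc
        simp [hK.deg]
      | cons b l4 =>
        have gb := g3 b List.mem_cons_self
        simp only [pP, one_mul] at hQ hc
        have hb := first b _ gb hQ hc
        refine ⟨[], a :: (l2 ++ [b]), l4, k + 1, by simp, ?_, ?_, ?_, by simp, by simp, ?_, ?_⟩
        · intro h hh
          simp only [List.mem_cons, List.mem_append, List.not_mem_nil, or_false] at hh
          rcases hh with rfl | hh | rfl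
          exacts [ga, g2 _ hh, gb]
        · exact fun h hh => g3 h (List.mem_cons_of_mem _ hh)
        · simp at hlen ⊢; omega
        · rw [pP, pP_append, e2]
          simp only [pP, mul_one]
          rw [hK.comm_pow, ← mul_assoc, hb, han, pow_succ']
        · simpa [pP] using ndvd_tail _ _ hQ
    | cons b l1 =>
      have gb := g1 b List.mem_cons_self
      have g1' : ∀ h ∈ l1, Good K h := fun h hh => g1 h (List.mem_cons_of_mem _ hh)
      rw [pP, mul_assoc] at hQ hc
      have hb := first b _ gb hQ hc
      have hQ' := ndvd_tail _ _ hQ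
      by_cases hl1 : l1 = []
      · subst hl1
        refine ⟨[], a :: b :: l2, l3, k + 1, by simp, ?_, g3, ?_, by simp, by simp, ?_, ?_⟩
        · simpa using ⟨ga, gb, g2⟩
        · simp at hlen ⊢; omega
        · rw [pP, pP, e2, ← mul_assoc, hb, han, pow_succ']
        · exact hQ'
      cases k with
      | zero =>
        refine ⟨[], [a, b], l1 ++ l2 ++ l3, 1, by simp, ?_, ?_, ?_, by simp, by simp, ?_, ?_⟩
        · simpa using ⟨ga, gb⟩
        · intro h hh
          simp only [List.mem_append] at hh
          rcases hh with (hh | hh) | hh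
          exacts [g1' _ hh, g2 _ hh, g3 _ hh]
        · simp at hlen ⊢; omega
        · simp only [pP, mul_one]; rw [hb, han, pow_one]
        · simpa [pP_append, e2, pP] using hQ'
      | succ k =>
        rcases List.eq_nil_or_concat l3 with rfl | ⟨l4, r, rfl⟩
        · exfalso
          refine impossible hK ga gb g1' g2 hb hl1 e2 ?_ ?_
          · simpa [pP] using hQ'
          · simpa using hr0
        · have hr0' : ¬ (K ∣ pP (a :: b :: (l1 ++ l2 ++ l4)) ∧ K ∣ pD (a :: b :: (l1 ++ l2 ++ l4))) := by
            intro h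
            apply hr0
            have := dvd_mid hK [] (a :: b :: (l1 ++ l2 ++ l4)) [r] h.1 h.2
            simpa using this
          obtain ⟨m1, m2, m3, j, f1, f2, f3, flen, fP, fD, f4, fQ⟩ :=
            ih (a :: b :: (l1 ++ l2 ++ l4)) (by simp at hlen ⊢; omega) (by
              intro h hh
              simp only [List.mem_cons, List.mem_append] at hh
              rcases hh with rfl | rfl | (hh | hh) | hh
              exacts [ga, gb, g1' _ hh, g2 _ hh, g3 _ (by simp [hh])]) hr0'
          have gr : Good K r := g3 r (by simp)
          have el : a :: (b :: l1 ++ l2 ++ l4.concat r) = (a :: b :: (l1 ++ l2 ++ l4)) ++ [r] := by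
            simp
          rw [el, pP_append, pD_append, fP, fD, ← pP_append, ← pD_append]
          have hval : k + 2 = j ∧ pP l1 * pP l4 = pP m1 * pP m3 := by
            apply hK.val
            · intro h; apply hQ'
              rw [List.concat_eq_append, pP_append, ← mul_assoc]
              exact h.mul_right _
            · exact fQ
            · rw [pP, pP, pP_append, pP_append, pP_append, pP_append, e2, f4, hb, ← mul_assoc, han,
                mul_assoc (pP l1), hK.comm_pow _ (pP l4), ← mul_assoc (pP l1), ← hK.comm_pow _ (pP l1 * pP l4),
                mul_assoc (pP m1), hK.comm_pow _ (pP m3), ← mul_assoc (pP m1), ← hK.comm_pow _ (pP m1 * pP m3),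
                ← mul_assoc, ← pow_succ'] at fP
              exact fP
          refine ⟨m1, m2, m3 ++ [r], j, f1, f2, ?_, ?_, by simp, by simp, f4, ?_⟩
          · intro h hh
            simp only [List.mem_append, List.mem_singleton] at hh
            rcases hh with hh | rfl
            exacts [f3 _ hh, gr]
          · simp; omega
          · rw [pP_append, ← mul_assoc, ← hval.2, mul_assoc, ← pP_append]
            simpa using hQ'

end mainind
section final

lemma dhQ_mul (A B : Hq[X]) : dhQ (A * B) = dhQ A * dhQ B := by simp [dhQ]

lemma dhQ_add (A B : Hq[X]) : dhQ (A + B) = dhQ A + dhQ B := by simp [dhQ]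

lemma eps_dhQ (A : Hq[X]) : (C (ε : DHq)) * dhQ A = dhQ A * C (ε : DHq) := by
  ext1 n
  rw [coeff_C_mul, coeff_mul_C]
  exact (DualNumber.commute_eps_left _).eq

lemma eps_eps : (C (ε : DHq)) * C (ε : DHq) = 0 := by
  rw [← C_mul, DualNumber.eps_mul_eps, C_0]

lemma mp_mul (P D P' D' : Hq[X]) : mp P D * mp P' D' = mp (P * P') (P * D' + D * P') := by
  simp only [mp, dhQ_mul, dhQ_add]
  have e : (dhQ P + C (ε : DHq) * dhQ D) * (dhQ P' + C (ε : DHq) * dhQ D')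
      = dhQ P * dhQ P' + (dhQ P * C (ε : DHq)) * dhQ D' + C (ε : DHq) * (dhQ D * dhQ P')
        + C (ε : DHq) * (dhQ D * C (ε : DHq)) * dhQ D' := by noncomm_ring
  rw [e, ← eps_dhQ, ← eps_dhQ, ← mul_assoc (C (ε : DHq)) (C (ε : DHq)), eps_eps]
  noncomm_ring

lemma lin_mp (h : DHq) : (X - C h : DHq[X]) = mp (X - C h.fst) (-C h.snd) := by
  have e : C h = C (inl h.fst) - C (ε : DHq) * C (inl (-h.snd)) := by
    rw [← C_mul, ← C_sub]; congr 1; ext <;> simp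
  simp only [mp, dhQ, Polynomial.map_sub, ← C_neg, map_X, map_C]
  rw [e]
  simp only [inlHom_apply]
  abel

lemma prod_mp (L : List DHq) : (L.map fun h => (X - C h : DHq[X])).prod = mp (pP L) (pD L) := by
  induction L with
  | nil => simp [mp, pP, pD, dhQ]
  | cons h L ih =>
    rw [List.map_cons, List.prod_cons, ih, lin_mp, mp_mul, pP, pD, neg_mul, ← sub_eq_add_neg]

lemma primal_mp (P D : Hq[X]) : primal (mp P D) = P := by
  ext1 n
  simp [primal, mp, dhQ]

lemma coeff_cstarD (A : DHq[X]) (n : ℕ) : (cstar A).coeff n = star (A.coeff n) := by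
  unfold cstar
  rw [Polynomial.sum_def, Polynomial.finsetSum_coeff]
  simp only [Polynomial.coeff_C_mul, Polynomial.coeff_X_pow, mul_ite, mul_one, mul_zero]
  rw [Finset.sum_ite_eq]
  split_ifs with h
  · rfl
  · rw [Polynomial.notMem_support_iff.mp h]
    change (0 : DHq) = inl (star (0 : Hq)) + inr (star (0 : Hq))
    simp

lemma fst_starD (x : DHq) : (star x).fst = star x.fst := by
  change (inl (star x.fst) + inr (star x.snd) : DHq).fst = _
  simp

lemma snd_starD (x : DHq) : (star x).snd = star x.snd := by
  change (inl (star x.fst) + inr (star x.snd) : DHq).snd = _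
  simp

lemma motion_lin {h : DHq} (hm : IsMotion (X - C h)) :
    star h.snd = -h.snd ∧ h.fst * h.snd = h.snd * star h.fst := by
  obtain ⟨f, -, hf⟩ := hm
  have h0 := congrArg (fun A => (A.coeff 0).snd) hf
  have h1 := congrArg (fun A => (A.coeff 1).snd) hf
  simp only [mul_coeff_zero, mul_coeff_one, coeff_cstarD, dPoly, dhQ, coeff_map, inlHom_apply, snd_inl] at h0 h1
  simp [snd_starD, fst_starD] at h0 h1
  have hs : star h.snd = -h.snd := by
    exact eq_neg_of_add_eq_zero_left (neg_injective (by rw [neg_zero]; simpa [add_comm] using h1))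
  refine ⟨hs, ?_⟩
  rw [hs, mul_neg, add_neg_eq_zero] at h0
  exact h0.symm

lemma nq_monic (p : Hq) : (nq p).Monic ∧ (nq p).natDegree = 2 := by
  have e : nq p = C 1 * X ^ 2 + C (-(2 * p.re)) * X + C (Quaternion.normSq p) := by
    simp [nq, sub_eq_add_neg]
  have hd : (nq p).natDegree = 2 := by rw [e]; exact natDegree_quadratic one_ne_zero
  refine ⟨?_, hd⟩
  rw [Monic, e]; exact leadingCoeff_quadratic one_ne_zero

lemma assoc_pow {N N' c : ℝ[X]} (hN : Irreducible N) (hN' : N'.Monic) (ha : Associated N N')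
    (hc : c.Monic) {n : ℕ} (h : c ∣ N ^ n) : ∃ i, c = N' ^ i := by
  obtain ⟨i, -, hi⟩ := (_root_.dvd_prime_pow hN.prime n).mp h
  exact ⟨i, eq_of_monic_of_associated hc (hN'.pow i) (hi.trans (ha.pow_pow))⟩

end final

/-- For a motion polynomial of primary norm admitting a linear factorization, there is a
three-part factorization with a translational middle factor. -/
theorem primary_factorization_pattern
    (n : ℕ) (c : ℝ[X]) (Q D : Hq[X]) (N : ℝ[X]) (M : DHq[X])
    (hM : M = mp (qPoly c * Q) D)
    (hc : c.Monic) (hmonic : M.Monic) (hmotion : IsMotion M)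
    (hred : ReducedD M) (hbdd : BoundedD M) (hQred : ReducedQ Q)
    (hdeg : M.natDegree = n)
    (hN2 : N.natDegree = 2) (hNirr : Irreducible N)
    (hQnorm : qPoly (c ^ 2) * (Q * cstar Q) = qPoly (N ^ n))
    (hnorm : M * cstar M = dPoly (N ^ n))
    (hfact : HasLinFact M) :
    ∃ QL QR DL DR D' : Hq[X],
      M = mp QL DL * mp (qPoly c) D' * mp QR DR ∧
      HasLinFact (mp QL DL) ∧ HasLinFact (mp (qPoly c) D') ∧
      HasLinFact (mp QR DR) := by
  obtain ⟨L, hL, hLM⟩ := hfact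
  rw [prod_mp] at hLM
  have hP : pP L = qPoly c * Q := by
    have := congrArg primal (hLM.symm.trans hM)
    rwa [primal_mp, primal_mp] at this
  have hN0 : N ≠ 0 := hNirr.ne_zero
  obtain ⟨N', hN'm, hN'a⟩ : ∃ N' : ℝ[X], N'.Monic ∧ Associated N N' := by
    refine ⟨_, monic_mul_leadingCoeff_inv hN0, ?_⟩
    refine associated_mul_unit_right _ _ ?_
    rw [isUnit_C]
    exact (inv_ne_zero (leadingCoeff_ne_zero.mpr hN0)).isUnit
  have hN'd : N'.natDegree = 2 := by
    rw [← hN2]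
    exact (natDegree_eq_of_degree_eq (degree_eq_degree_of_associated hN'a)).symm
  have hnP : pP L * cstar (pP L) = qPoly (N ^ n) := by
    rw [← hQnorm, hP, cstar_mulH, cstar_qPoly, sq, qPoly_mul]
    rw [← qPoly_comm c (cstar Q), mul_assoc, mul_assoc, ← mul_assoc Q, ← qPoly_comm c Q]
    simp only [mul_assoc]
  have hprod : (L.map fun x => nq x.fst).prod = N ^ n := by
    apply qPoly_inj
    rw [← norm_pP, hnP]
  have hK : Quad (qPoly N') := by
    refine ⟨hN'm.map _, ?_, qPoly_comm _, cstar_qPoly _⟩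
    rw [qPoly, hN'm.natDegree_map, hN'd]
  have hgood : ∀ h ∈ L, Good (qPoly N') h := by
    intro h hh
    have hd : nq h.fst ∣ N ^ n := by
      rw [← hprod]
      exact List.dvd_prod (List.mem_map_of_mem hh)
    obtain ⟨i, hi⟩ := assoc_pow hNirr hN'm hN'a (nq_monic h.fst).1 hd
    have hi1 : i = 1 := by
      have := congrArg natDegree hi
      rw [(nq_monic h.fst).2, hN'm.natDegree_pow, hN'd] at this
      omega
    subst hi1
    rw [pow_one] at hi
    obtain ⟨m1, m2⟩ := motion_lin (hL h hh)
    refine ⟨hL h hh, ?_, m1, m2⟩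
    rw [NormK, ← qPoly_nq, hi]
  obtain ⟨j, hj⟩ : ∃ j, c = N' ^ j := by
    refine assoc_pow (n := n) hNirr hN'm hN'a hc ?_
    refine (Polynomial.map_dvd_map (algebraMap ℝ Hq) (algebraMap ℝ Hq).injective hc).mp ?_
    refine ⟨Q * cstar (pP L), ?_⟩
    have := hnP.symm
    rw [hP, mul_assoc, ← hP] at this
    exact this
  have hN'1 : N' ≠ 1 := by
    intro h; rw [h] at hN'd; simp at hN'd
  have hredL : ¬ (qPoly N' ∣ pP L ∧ qPoly N' ∣ pD L) := by
    rintro ⟨⟨A, hA⟩, ⟨B, hB⟩⟩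
    apply hN'1
    refine hred N' hN'm ⟨mp A B, ?_⟩
    have e : dPoly N' = mp (qPoly N') 0 := by simp [dPoly, mp, dhQ]
    rw [hLM, hA, hB, e, mp_mul]
    simp
  obtain ⟨l1, l2, l3, k, g1, g2, g3, -, eP, eD, e2, hQ⟩ := main_ind hK _ L rfl hgood hredL
  have hkj : k = j := by
    have hQ' : ¬ qPoly N' ∣ Q := fun ⟨B, hB⟩ => hN'1 (hQred N' hN'm ⟨B, hB⟩)
    refine (hK.val hQ hQ' ?_).1
    rw [← qPoly_pow N' j, ← hj, ← hP, eP, pP_append, pP_append, e2, ← hK.comm_pow, mul_assoc]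
  have hcl : pP l2 = qPoly c := by rw [e2, hkj, hj, qPoly_pow]
  have hfac : ∀ l : List DHq, (∀ h ∈ l, Good (qPoly N') h) → HasLinFact (mp (pP l) (pD l)) :=
    fun l hl => ⟨l, fun h hh => (hl h hh).mot, (prod_mp l).symm⟩
  refine ⟨pP l1, pP l3, pD l1, pD l3, pD l2, ?_, hfac l1 g1, ?_, hfac l3 g3⟩
  · rw [hLM, eP, eD, ← hcl, mp_mul, mp_mul, pP_append, pD_append, pP_append, pD_append]
  · rw [← hcl]; exact hfac l2 g2
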